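/- Let g : ℝ^m → ℝ be μ-strongly convex and L-smooth with 0 < μ ≤ L, and let 0 < η ≤ 2/(L + μ). Then the gradient-descent map x ↦ x − η∇g(x) is (1 − ημ)-Lipschitz; that is, for all x, y ∈ ℝ^m: ‖(x − η∇g(x)) − (y − η∇g(y))‖ ≤ (1 − ημ)·‖x − y‖. -/

import Mathlib

/-!
Write `h = g - (μ/2)‖·‖²`, `u = x - y` and `d = ∇h(x) - ∇h(y) = ∇g(x) - ∇g(y) - μ u`. The difference
of the two gradient steps is `(1 - ημ) u - η d`, so after expanding the square the claim becomes
`η ‖d‖² ≤ 2 (1 - ημ) ⟪d, u⟫`. Since `η (L - μ) ≤ 2 (1 - ημ)` is the step-size condition, it suffices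
that `∇h` is co-coercive: `‖d‖² ≤ (L - μ) ⟪d, u⟫` and `0 ≤ ⟪d, u⟫`.

Co-coercivity comes from comparing, at the points `y + t d` and `x - t d`, the tangent lower bound
(`SConvex.lower_bound`) with the descent-lemma upper bound (`LSmooth.upper_bound`). This gives
`0 ≤ (L - μ) ‖d‖² t² - 2 ‖d‖² t + ⟪d, u⟫` for every real `t`, and the discriminant of this quadratic
must be nonpositive. Using all `t` instead of the optimal `t = 1 / (L - μ)` also covers `L = μ`.
-/

noncomputable section

/-- `g` is `L`-smooth: differentiable with `L`-Lipschitz gradient. -/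
def LSmooth {E : Type*} [NormedAddCommGroup E] [InnerProductSpace ℝ E] [CompleteSpace E]
    (L : ℝ) (g : E → ℝ) : Prop :=
  Differentiable ℝ g ∧ LipschitzWith L.toNNReal (gradient g)

/-- `g` is `μ`-strongly convex: `g - (μ/2)‖·‖²` is convex. -/
def SConvex {E : Type*} [NormedAddCommGroup E] [InnerProductSpace ℝ E]
    (μ : ℝ) (g : E → ℝ) : Prop :=
  ConvexOn ℝ Set.univ (fun x => g x - μ / 2 * ‖x‖ ^ 2)

lemma norm_add_smul_sq {E : Type*} [NormedAddCommGroup E] [InnerProductSpace ℝ E]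
    (x v : E) (t : ℝ) :
    ‖x + t • v‖ ^ 2 = ‖x‖ ^ 2 + 2 * t * inner ℝ x v + t ^ 2 * ‖v‖ ^ 2 := by
  rw [norm_add_sq_real, inner_smul_right, norm_smul, mul_pow, Real.norm_eq_abs, sq_abs]
  ring

section Helpers

variable {E : Type*} [NormedAddCommGroup E] [InnerProductSpace ℝ E] [CompleteSpace E]

lemma hasDerivAt_comp_line {g : E → ℝ} (hg : Differentiable ℝ g) (x v : E) (t : ℝ) :
    HasDerivAt (fun s : ℝ => g (x + s • v)) (inner ℝ (gradient g (x + t • v)) v) t := by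
  have hline : HasDerivAt (fun s : ℝ => x + s • v) v t := by
    simpa using ((hasDerivAt_id t).smul_const v).const_add x
  have h := (hg (x + t • v)).hasFDerivAt.comp_hasDerivAt t hline
  rw [inner_gradient_left]
  exact h

/-- The tangent inequality for the convex function `g - (μ/2)‖·‖²`, rewritten in terms of `g`. -/
lemma SConvex.lower_bound {g : E → ℝ} {μ : ℝ} (hg : Differentiable ℝ g) (hsc : SConvex μ g)
    (x v : E) : g x + inner ℝ (gradient g x) v + μ / 2 * ‖v‖ ^ 2 ≤ g (x + v) := by
  set φ : ℝ → ℝ := fun s => g (x + s • v) - μ / 2 * ‖x + s • v‖ ^ 2 with hφ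
  have hconv : ConvexOn ℝ Set.univ φ := by
    refine ⟨convex_univ, fun a _ b _ p q hp hq hpq => ?_⟩
    have h := hsc.2 (Set.mem_univ (x + a • v)) (Set.mem_univ (x + b • v)) hp hq hpq
    have hpt : p • (x + a • v) + q • (x + b • v) = x + (p • a + q • b) • v := by
      calc p • (x + a • v) + q • (x + b • v) = (p + q) • x + (p • a + q • b) • v := by
            simp only [smul_eq_mul]; module
        _ = _ := by rw [hpq, one_smul]
    rw [hpt] at h
    exact h
  have hderiv : HasDerivAt φ (inner ℝ (gradient g x) v - μ * inner ℝ x v) 0 := by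
    have h1 := hasDerivAt_comp_line hg x v 0
    have h2 : HasDerivAt (fun s : ℝ => μ / 2 * ‖x + s • v‖ ^ 2) (μ * inner ℝ x v) 0 := by
      simp only [norm_add_smul_sq]
      have := (((((hasDerivAt_id (0 : ℝ)).const_mul 2).mul_const (inner ℝ x v)).const_add
        (‖x‖ ^ 2)).add (((hasDerivAt_id (0 : ℝ)).pow 2).mul_const (‖v‖ ^ 2))).const_mul (μ / 2)
      exact this.congr_deriv (by simp; ring)
    rw [zero_smul, add_zero] at h1
    exact h1.sub h2
  have hslope := hconv.le_slope_of_hasDerivAt (Set.mem_univ 0) (Set.mem_univ 1) one_pos hderiv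
  have hsq := norm_add_smul_sq x v 1
  simp only [slope_def_field, hφ, one_smul, zero_smul, add_zero, sub_zero, div_one] at hslope hsq
  rw [hsq] at hslope
  linarith

/-- The descent lemma. -/
lemma LSmooth.upper_bound {g : E → ℝ} {L : ℝ} (hL : 0 ≤ L) (hg : LSmooth L g)
    (x v : E) : g (x + v) ≤ g x + inner ℝ (gradient g x) v + L / 2 * ‖v‖ ^ 2 := by
  set φ : ℝ → ℝ := fun s =>
    s * inner ℝ (gradient g x) v + s ^ 2 * (L / 2 * ‖v‖ ^ 2) - g (x + s • v) with hφ
  have hderiv (t : ℝ) : HasDerivAt φ (inner ℝ (gradient g x) v + t * (L * ‖v‖ ^ 2)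
      - inner ℝ (gradient g (x + t • v)) v) t := by
    have := (((hasDerivAt_id t).mul_const (inner ℝ (gradient g x) v)).add
      (((hasDerivAt_id t).pow 2).mul_const (L / 2 * ‖v‖ ^ 2))).sub
      (hasDerivAt_comp_line hg.1 x v t)
    exact this.congr_deriv (by simp; ring)
  have hmono : MonotoneOn φ (Set.Ici 0) := by
    refine monotoneOn_of_deriv_nonneg (convex_Ici 0)
      (fun t _ => (hderiv t).continuousAt.continuousWithinAt)
      (fun t _ => (hderiv t).differentiableAt.differentiableWithinAt) fun t ht => ?_
    rw [interior_Ici, Set.mem_Ioi] at ht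
    rw [(hderiv t).deriv]
    have hlip : ‖gradient g (x + t • v) - gradient g x‖ ≤ L * (t * ‖v‖) := by
      have h := hg.2.dist_le_mul (x + t • v) x
      rwa [dist_eq_norm, dist_eq_norm, Real.coe_toNNReal L hL, add_sub_cancel_left, norm_smul,
        Real.norm_of_nonneg ht.le] at h
    have hcs := real_inner_le_norm (gradient g (x + t • v) - gradient g x) v
    have hmul := mul_le_mul_of_nonneg_right hlip (norm_nonneg v)
    rw [inner_sub_left] at hcs
    linarith
  have h01 := hmono (Set.mem_Ici.2 le_rfl) (Set.mem_Ici.2 zero_le_one) zero_le_one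
  simp only [hφ, one_smul, zero_smul, add_zero, zero_mul, one_mul, one_pow, ne_eq,
    OfNat.ofNat_ne_zero, not_false_eq_true, zero_pow] at h01
  linarith

/-- One half of the co-coercivity estimate: the lower bound based at `x` and the upper bound based
at `y` are compared at `y + w`. -/
lemma lower_le_upper {g : E → ℝ} {L μ : ℝ} (hL : 0 ≤ L) (hg : LSmooth L g) (hsc : SConvex μ g)
    (x y w : E) :
    g x + inner ℝ (gradient g x) (y - x) + μ / 2 * ‖y - x‖ ^ 2
      + inner ℝ (gradient g x - gradient g y - μ • (x - y)) w
      ≤ g y + (L - μ) / 2 * ‖w‖ ^ 2 := by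
  have h1 := hsc.lower_bound hg.1 x (y - x + w)
  have h2 := hg.upper_bound hL y w
  have hpt : x + (y - x + w) = y + w := by abel
  have hneg : inner ℝ (y - x) w = -inner ℝ (x - y) w := by rw [← inner_neg_left, neg_sub]
  rw [hpt, norm_add_sq_real, inner_add_right, hneg] at h1
  rw [inner_sub_left, inner_sub_left, real_inner_smul_left]
  linarith

/-- Co-coercivity of the gradient of `g - (μ/2)‖·‖²`. -/
lemma cocoercive {g : E → ℝ} {L μ : ℝ} (hL : 0 ≤ L) (hμL : μ ≤ L) (hg : LSmooth L g)
    (hsc : SConvex μ g) (x y : E) :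
    0 ≤ inner ℝ (gradient g x - gradient g y - μ • (x - y)) (x - y) ∧
    ‖gradient g x - gradient g y - μ • (x - y)‖ ^ 2 ≤
      (L - μ) * inner ℝ (gradient g x - gradient g y - μ • (x - y)) (x - y) := by
  set d := gradient g x - gradient g y - μ • (x - y) with hd
  have hquad (t : ℝ) :
      0 ≤ ((L - μ) * ‖d‖ ^ 2) * (t * t) + (-2 * ‖d‖ ^ 2) * t + inner ℝ d (x - y) := by
    have h1 := lower_le_upper hL hg hsc x y (t • d)
    have h2 := lower_le_upper hL hg hsc y x (-(t • d))
    have hswap : gradient g y - gradient g x - μ • (y - x) = -d := by rw [hd]; module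
    have hyx : y - x = -(x - y) := by abel
    have hin : inner ℝ d (x - y) = inner ℝ (gradient g x) (x - y)
        - inner ℝ (gradient g y) (x - y) - μ * ‖x - y‖ ^ 2 := by
      rw [hd, inner_sub_left, inner_sub_left, real_inner_smul_left, real_inner_self_eq_norm_sq]
    have hnorm : ‖t • d‖ ^ 2 = t ^ 2 * ‖d‖ ^ 2 := by
      rw [norm_smul, mul_pow, Real.norm_eq_abs, sq_abs]
    rw [← hd, hyx, inner_neg_right, norm_neg, real_inner_smul_right, real_inner_self_eq_norm_sq,
      hnorm] at h1
    rw [hswap, inner_neg_neg, norm_neg, real_inner_smul_right, real_inner_self_eq_norm_sq,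
      hnorm] at h2
    linarith
  have hc : 0 ≤ inner ℝ d (x - y) := by simpa using hquad 0
  refine ⟨hc, ?_⟩
  have hdisc := discrim_le_zero hquad
  rw [discrim] at hdisc
  rcases (sq_nonneg ‖d‖).eq_or_lt with h0 | hpos
  · rw [← h0]
    exact mul_nonneg (sub_nonneg.2 hμL) hc
  · refine le_of_mul_le_mul_left ?_ hpos
    linarith

end Helpers

/-- for a `μ`-strongly convex, `L`-smooth `g` and `0 < η ≤ 2/(L+μ)`,
the gradient-descent map `x ↦ x − η∇g(x)` is `(1 − ημ)`-Lipschitz. -/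
theorem gradient_descent_map_contraction
    (m : ℕ) (g : EuclideanSpace ℝ (Fin m) → ℝ) (L μ η : ℝ)
    (hμ0 : 0 < μ) (hμL : μ ≤ L)
    (hsmooth : LSmooth L g) (hsc : SConvex μ g)
    (hη0 : 0 < η) (hη1 : η ≤ 2 / (L + μ)) :
    ∀ x y : EuclideanSpace ℝ (Fin m),
      ‖(x - η • gradient g x) - (y - η • gradient g y)‖ ≤ (1 - η * μ) * ‖x - y‖ := by
  intro x y
  obtain ⟨hc, hq⟩ := cocoercive (hμ0.le.trans hμL) hμL hsmooth hsc x y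
  set d := gradient g x - gradient g y - μ • (x - y) with hd
  have hstep : η * (L - μ) ≤ 2 * (1 - η * μ) := by
    rw [le_div_iff₀ (by linarith)] at hη1
    linarith
  have hrate : 0 ≤ 1 - η * μ := by
    have := mul_nonneg hη0.le (sub_nonneg.2 hμL)
    linarith
  have hdiff : (x - η • gradient g x) - (y - η • gradient g y)
      = (1 - η * μ) • (x - y) - η • d := by
    rw [hd]; module
  have hkey : η * ‖d‖ ^ 2 ≤ 2 * (1 - η * μ) * inner ℝ d (x - y) :=
    calc η * ‖d‖ ^ 2 ≤ η * ((L - μ) * inner ℝ d (x - y)) :=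
          mul_le_mul_of_nonneg_left hq hη0.le
      _ = η * (L - μ) * inner ℝ d (x - y) := by ring
      _ ≤ _ := mul_le_mul_of_nonneg_right hstep hc
  refine (sq_le_sq₀ (norm_nonneg _) (mul_nonneg hrate (norm_nonneg _))).1 ?_
  rw [hdiff, norm_sub_sq_real, real_inner_smul_left, real_inner_smul_right,
    real_inner_comm, norm_smul, norm_smul, mul_pow, mul_pow, Real.norm_eq_abs, Real.norm_eq_abs,
    sq_abs, sq_abs]
  have := mul_le_mul_of_nonneg_left hkey hη0.le
  linarith

end
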